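/- For every integer l ≥ 4 and every δ > 0 there exist constants c, C > 0 and q₀ such that for every prime power q ≥ q₀ there exists a set P ⊆ F² with |P| ≥ c · q^{2 − l/(l−1)} satisfying: (i) P contains no l distinct collinear points; (ii) a(P) ≤ |P|^{((l−1)/(l−2))·(1/2 + δ)}; (iii) T(P) ≤ C · |P|^{(2l−5)/(l−2)}. -/

import Mathlib

/-!
The set `P` is a random subset of the plane, of density `p ≈ q ^ (-l/(l-1))`, from which one point
of each collinear `l`-set has been deleted. Its expected size is about `q ^ ((l-2)/(l-1))`, and the
collinear `l`-sets and triples are counted by their expectations, since there are at most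
`2 q ^ (2 + j)` collinear `j`-sets (`card_collinear_sets_le`). It has no large arc because the plane
has few arcs of size `k ≈ q ^ (1/2 + 2α)`: at most `q ^ (o(k)) (6q) ^ k` of them (`card_arcs_le`),
while `6 q p` is a negative power of `q`.

The count of arcs uses graph containers. Fix `m ≈ q ^ (1/2 + α)` points `S` of the arc and join two
points of the plane when they are collinear with a point of `S`. The rest of the arc is an
independent set of this graph, and lies outside the secants of `S`. Off these secants, every set `U`
of more than `4q` points spans a vertex of degree at least `m |U| / (4q)` (`exists_large_degree`, by
Cauchy–Schwarz for the projections from the points of `S`), so the Kleitman–Winston algorithm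
(`graph_containers`) puts the independent sets into `q ^ O(t)` containers of size `4q + t`, where
`t ≈ q ^ (1/2 - α) log q`.

All random estimates are combined into a single first moment (`exists_set_of_parameters`).
-/

open Finset MeasureTheory
open scoped NNReal ENNReal

/-- A set `P` in the affine plane over `F` is an arc if it contains no three
distinct collinear points. -/
def IsArc (F : Type*) [Field F] (P : Set (F × F)) : Prop :=
  ∀ a ∈ P, ∀ b ∈ P, ∀ c ∈ P,
    a ≠ b → a ≠ c → b ≠ c → ¬ Collinear F ({a, b, c} : Set (F × F))

/-- `numArcs F k` is the number of `k`-element arcs in `F²`. -/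
noncomputable def numArcs (F : Type*) [Field F] [Fintype F] (k : ℕ) : ℕ :=
  Nat.card {s : Finset (F × F) // s.card = k ∧ IsArc F ↑s}

/-- `maxArc F P` is the maximum cardinality of an arc contained in `P`. -/
noncomputable def maxArc (F : Type*) [Field F] (P : Finset (F × F)) : ℕ :=
  sSup {k : ℕ | ∃ s : Finset (F × F), s ⊆ P ∧ s.card = k ∧ IsArc F ↑s}

/-- `numCollinearTriples F P` is the number of 3-element collinear subsets of `P`. -/
noncomputable def numCollinearTriples (F : Type*) [Field F] (P : Finset (F × F)) : ℕ :=
  Nat.card {s : Finset (F × F) // s ⊆ P ∧ s.card = 3 ∧ Collinear F (↑s : Set (F × F))}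

/-- `P` contains no `l` distinct collinear points. -/
def NoLCollinear (F : Type*) [Field F] (l : ℕ) (P : Finset (F × F)) : Prop :=
  ∀ s : Finset (F × F), s ⊆ P → s.card = l → ¬ Collinear F (↑s : Set (F × F))

/-- The product Bernoulli(p) measure on subsets of `F²` (encoded as functions
`F × F → Bool`): each point is included independently with probability `p`. -/
noncomputable def randomMeasure (F : Type*) [Field F] [Fintype F] (p : ℝ≥0) (hp : p ≤ 1) :
    Measure ((F × F) → Bool) :=
  Measure.pi fun _ => (PMF.bernoulli p (by exact_mod_cast hp)).toMeasure

/-- The subset of `F²` corresponding to an indicator function `Q : F × F → Bool`. -/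
noncomputable def toSubset {F : Type*} [Field F] [Fintype F] (Q : (F × F) → Bool) :
    Finset (F × F) := Finset.univ.filter fun x => Q x = true

/-- `L` is an affine line in `F²`, i.e. the affine span of two distinct points. -/
def IsAffineLine (F : Type*) [Field F] (L : Set (F × F)) : Prop :=
  ∃ a b : F × F, a ≠ b ∧ L = (affineSpan F {a, b} : Set (F × F))

/-! ### Graph containers -/

/-- The Kleitman–Winston container lemma. If every vertex set `W ⊆ U` with more than `R` elements
spans a vertex adjacent to at least `β |W|` others, then the independent subsets of `U` are covered
by at most `(n + 1) ^ t` sets of size at most `R + t`, as soon as `|U| (1 - β) ^ t ≤ R`.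
Branching on whether a vertex of large degree belongs to the independent set either removes that
vertex from `U`, or records it and shrinks `U` by a factor `1 - β`; the second happens at most
`t` times. -/
theorem graph_containers {V : Type*} [DecidableEq V] (adj : V → V → Prop) [DecidableRel adj]
    (β : ℝ) (R : ℕ) (hβ1 : β ≤ 1) :
    ∀ (n : ℕ) (U : Finset V), U.card ≤ n →
      (∀ W ⊆ U, R < W.card →
        ∃ v ∈ W, β * (W.card : ℝ) ≤ ((W.filter fun w => w ≠ v ∧ adj v w).card : ℝ)) →
      ∀ t : ℕ, (U.card : ℝ) * (1 - β) ^ t ≤ R →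
      ∃ 𝒞 : Finset (Finset V), 𝒞.card ≤ (n + 1) ^ t ∧ (∀ C ∈ 𝒞, C.card ≤ R + t) ∧
        ∀ I ⊆ U, (∀ x ∈ I, ∀ y ∈ I, x ≠ y → ¬ adj x y) → ∃ C ∈ 𝒞, I ⊆ C := by
  intro n
  induction n with
  | zero =>
    intro U hU _ t _
    have : U = ∅ := by simpa using hU
    subst this
    exact ⟨{∅}, by simp, by simp, fun I hI _ => ⟨∅, by simp, hI⟩⟩
  | succ n ih =>
    intro U hU hdeg t ht
    by_cases hR : U.card ≤ R
    · refine ⟨{U}, ?_, ?_, fun I hI _ => ⟨U, by simp, hI⟩⟩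
      · simpa using Nat.one_le_pow _ _ (by omega)
      · simp; omega
    push Not at hR
    obtain _ | t := t
    · exfalso
      have : (U.card : ℝ) ≤ R := by simpa using ht
      exact absurd (by exact_mod_cast this) (not_le.mpr hR)
    obtain ⟨v, hv, hvd⟩ := hdeg U subset_rfl hR
    set U₂ := U.filter fun w => w ≠ v ∧ ¬ adj v w with hU₂
    have hU₂e : U₂ ⊆ U.erase v := by
      intro w hw
      simp only [hU₂, mem_filter] at hw
      exact mem_erase.mpr ⟨hw.2.1, hw.1⟩
    have hcE : (U.erase v).card ≤ n := by
      rw [card_erase_of_mem hv]; omega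
    have hsum : U₂.card + (U.filter fun w => w ≠ v ∧ adj v w).card ≤ U.card := by
      rw [← card_union_of_disjoint]
      · exact card_le_card (union_subset (filter_subset _ _) (filter_subset _ _))
      · rw [disjoint_left]
        intro w hw hw'
        simp only [hU₂, mem_filter] at hw hw'
        exact hw.2.2 hw'.2.2
    have hsumR : (U₂.card : ℝ) ≤ (U.card : ℝ) * (1 - β) := by
      have : (U₂.card : ℝ) + ((U.filter fun w => w ≠ v ∧ adj v w).card : ℝ) ≤ U.card := by
        exact_mod_cast hsum
      linarith
    have h1β : 0 ≤ 1 - β := by linarith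
    obtain ⟨𝒞₁, h₁c, h₁s, h₁⟩ := ih (U.erase v) hcE
      (fun W hW => hdeg W (hW.trans (erase_subset _ _))) (t + 1) (by
        refine le_trans ?_ ht
        gcongr
        exact erase_subset _ _)
    obtain ⟨𝒞₂, h₂c, h₂s, h₂⟩ := ih U₂ ((card_le_card hU₂e).trans hcE)
      (fun W hW => hdeg W (hW.trans (filter_subset _ _))) t (by
        refine le_trans ?_ ht
        rw [pow_succ', ← mul_assoc]
        gcongr)
    refine ⟨𝒞₁ ∪ 𝒞₂.image (insert v), ?_, ?_, ?_⟩
    · calc _ ≤ 𝒞₁.card + (𝒞₂.image (insert v)).card := card_union_le _ _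
        _ ≤ (n + 1) ^ (t + 1) + (n + 1) ^ t := add_le_add h₁c (card_image_le.trans h₂c)
        _ = (n + 1) ^ t * (n + 1 + 1) := by ring
        _ ≤ (n + 1 + 1) ^ t * (n + 1 + 1) := by gcongr; omega
        _ = _ := by ring
    · intro C hC
      rcases mem_union.mp hC with hC | hC
      · exact h₁s C hC
      · obtain ⟨D, hD, rfl⟩ := mem_image.mp hC
        have := card_insert_le v D
        have := h₂s D hD
        omega
    · intro I hI hind
      by_cases hvI : v ∈ I
      · obtain ⟨C, hC, hIC⟩ := h₂ (I.erase v) (by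
          intro w hw
          have hw' := mem_erase.mp hw
          exact mem_filter.mpr ⟨hI hw'.2, hw'.1, hind v hvI w hw'.2 (Ne.symm hw'.1)⟩)
          (fun x hx y hy => hind x (mem_of_mem_erase hx) y (mem_of_mem_erase hy))
        refine ⟨insert v C, mem_union_right _ (mem_image_of_mem _ hC), ?_⟩
        rw [← insert_erase hvI]
        exact insert_subset_insert _ hIC
      · obtain ⟨C, hC, hIC⟩ := h₁ I (by
          intro w hw
          exact mem_erase.mpr ⟨fun h => hvI (h ▸ hw), hI hw⟩) hind
        exact ⟨C, mem_union_left _ hC, hIC⟩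

/-! ### Collinearity graphs over an arc -/

/-- The determinant of `b - a` and `c - a`, which vanishes exactly when `a`, `b`, `c` are
collinear. -/
def crossDet {F : Type*} [Field F] (a b c : F × F) : F :=
  (b.1 - a.1) * (c.2 - a.2) - (c.1 - a.1) * (b.2 - a.2)

theorem collinear_iff_crossDet {F : Type*} [Field F] (a b c : F × F) :
    Collinear F ({a, b, c} : Set (F × F)) ↔ crossDet a b c = 0 := by
  rw [collinear_iff_of_mem (p₀ := a) (by simp)]
  constructor
  · rintro ⟨v, hv⟩
    obtain ⟨r, hr⟩ := hv b (by simp)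
    obtain ⟨r', hr'⟩ := hv c (by simp)
    subst hr hr'
    simp [crossDet]
    ring
  · intro h
    unfold crossDet at h
    by_cases hb : b = a
    · subst hb
      refine ⟨c - b, ?_⟩
      rintro p (rfl | rfl | rfl)
      · exact ⟨0, by simp⟩
      · exact ⟨0, by simp⟩
      · exact ⟨1, by simp⟩
    · refine ⟨b - a, ?_⟩
      rintro p (rfl | rfl | rfl)
      · exact ⟨0, by simp⟩
      · exact ⟨1, by simp⟩
      · by_cases h1 : b.1 - a.1 = 0
        · have h2 : b.2 - a.2 ≠ 0 := by
            intro h2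
            exact hb (Prod.ext (sub_eq_zero.mp h1) (sub_eq_zero.mp h2))
          refine ⟨(p.2 - a.2) / (b.2 - a.2), Prod.ext ?_ ?_⟩
          · have : p.1 - a.1 = 0 := by
              rw [h1] at h
              have : (p.1 - a.1) * (b.2 - a.2) = 0 := by linear_combination -h
              exact (mul_eq_zero.mp this).resolve_right h2
            simp [h1]
            linear_combination this
          · simp
            field_simp
            ring
        · refine ⟨(p.1 - a.1) / (b.1 - a.1), Prod.ext ?_ ?_⟩
          · simp
            field_simp
            ring
          · simp
            field_simp
            linear_combination h

/-- If `s` and `s'` both lie on the line through the distinct points `v` and `w`, then `v` lies on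
the line through `s` and `s'`. -/
theorem crossDet_eq_zero_of_pair {F : Type*} [Field F] {s s' v w : F × F} (hvw : v ≠ w)
    (h : crossDet s v w = 0) (hline : crossDet s' v w = 0) : crossDet v s s' = 0 := by
  unfold crossDet at *
  by_cases h1 : v.1 = w.1
  · have h2 : v.2 - w.2 ≠ 0 := fun h2 => hvw (Prod.ext h1 (sub_eq_zero.mp h2))
    apply (mul_eq_zero.mp (?_ : (v.2 - w.2) * _ = 0)).resolve_left h2
    rw [← h1] at h hline
    linear_combination (s'.2 - v.2) * h - (s.2 - v.2) * hline
  · have h2 : v.1 - w.1 ≠ 0 := sub_ne_zero.mpr h1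
    apply (mul_eq_zero.mp (?_ : (v.1 - w.1) * _ = 0)).resolve_left h2
    linear_combination (s'.1 - v.1) * h - (s.1 - v.1) * hline

/-- The direction of the line from `s` to `x`, with `none` as the vertical direction. At `x = s` the
value is `none` as well, which is harmless since `crossDet s s y = 0` for all `y`. -/
def slopeFrom {F : Type*} [Field F] [DecidableEq F] (s x : F × F) : Option F :=
  if x.1 = s.1 then none else some ((x.2 - s.2) / (x.1 - s.1))

theorem crossDet_of_slopeFrom_eq {F : Type*} [Field F] [DecidableEq F] {s x y : F × F}
    (h : slopeFrom s x = slopeFrom s y) : crossDet s x y = 0 := by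
  unfold slopeFrom at h
  unfold crossDet
  split_ifs at h with h1 h2 h2
  · rw [h1, h2]; ring
  · have h1' : x.1 - s.1 ≠ 0 := sub_ne_zero.mpr h1
    have h2' : y.1 - s.1 ≠ 0 := sub_ne_zero.mpr h2
    have := Option.some.inj h
    rw [div_eq_div_iff h1' h2'] at this
    linear_combination -this

/-- Cauchy–Schwarz: a map from `U` to `γ` has at least `|U|² / |γ|` collisions, counted as ordered
pairs including the diagonal. -/
theorem card_sq_le_collisions {α γ : Type*} [DecidableEq γ] [Fintype γ]
    (U : Finset α) (f : α → γ) :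
    U.card ^ 2 ≤ Fintype.card γ * ∑ v ∈ U, (U.filter fun w => f w = f v).card := by
  have h1 : U.card = ∑ g : γ, (U.filter fun w => f w = g).card :=
    card_eq_sum_card_fiberwise (fun _ _ => by simp)
  have h2 : ∑ v ∈ U, (U.filter fun w => f w = f v).card
      = ∑ g : γ, (U.filter fun w => f w = g).card ^ 2 := by
    rw [← sum_fiberwise_of_maps_to (s := U) (t := univ) (g := f) (fun _ _ => mem_univ _)]
    refine sum_congr rfl fun g _ => ?_
    rw [sum_congr rfl (g := fun _ => (U.filter fun w => f w = g).card)]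
    · simp [sq]
    · intro x hx
      rw [(mem_filter.mp hx).2]
  rw [h2, h1]
  simpa using sq_sum_le_card_mul_sum_sq (s := (univ : Finset γ))
    (f := fun g => (U.filter fun w => f w = g).card)

/-- Supersaturation. Let `U` avoid all secants of `S` and have more than `4q` points. Join two points
of `U` when they are collinear with some `s ∈ S`. Projecting `U` from `s` to the `q + 1` directions
produces at least `|U|² / (q + 1)` collisions, and no pair of distinct points collides from two
different `s`, since otherwise it would lie on a secant. Hence the graph has average degree at least
`|S| (|U| / (q + 1) - 1)`. -/
theorem exists_large_degree {F : Type*} [Field F] [Fintype F] [DecidableEq F]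
    (S U : Finset (F × F))
    (hU : ∀ x ∈ U, ∀ s ∈ S, ∀ s' ∈ S, s ≠ s' → crossDet x s s' ≠ 0)
    (hcard : 4 * Fintype.card F < U.card) :
    ∃ v ∈ U, ((S.card : ℝ) / (4 * Fintype.card F)) * (U.card : ℝ) ≤
      ((U.filter fun w => w ≠ v ∧ ∃ s ∈ S, crossDet s v w = 0).card : ℝ) := by
  have hq : 0 < Fintype.card F := Fintype.card_pos
  set q := Fintype.card F with hqdef
  have hUne : U.Nonempty := card_pos.mp (by omega)
  have hdisj : ∀ v ∈ U, ∑ s ∈ S, ((U.filter fun w => slopeFrom s w = slopeFrom s v).card)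
      ≤ (U.filter fun w => w ≠ v ∧ ∃ s ∈ S, crossDet s v w = 0).card + S.card := by
    intro v hv
    have hstep : ∀ s ∈ S, (U.filter fun w => slopeFrom s w = slopeFrom s v).card
        ≤ (U.filter fun w => w ≠ v ∧ crossDet s v w = 0).card + 1 := by
      intro s _
      refine le_trans (card_le_card (t := insert v _) ?_) (card_insert_le v _)
      intro w hw
      have hw' := mem_filter.mp hw
      by_cases hwv : w = v
      · exact mem_insert.mpr (Or.inl hwv)
      · exact mem_insert_of_mem
          (mem_filter.mpr ⟨hw'.1, hwv, crossDet_of_slopeFrom_eq hw'.2.symm⟩)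
    refine (sum_le_sum hstep).trans ?_
    rw [sum_add_distrib, sum_const, smul_eq_mul, mul_one]
    gcongr
    rw [← card_biUnion]
    · refine card_le_card ?_
      intro w hw
      obtain ⟨s, hs, hw⟩ := mem_biUnion.mp hw
      have hw' := mem_filter.mp hw
      exact mem_filter.mpr ⟨hw'.1, hw'.2.1, s, hs, hw'.2.2⟩
    · intro s hs s' hs' hss'
      rw [Function.onFun, disjoint_left]
      intro w hw hw'
      have hw := mem_filter.mp hw
      have hw' := mem_filter.mp hw'
      exact hU v hv s hs s' hs' hss'
        (crossDet_eq_zero_of_pair (Ne.symm hw.2.1) hw.2.2 hw'.2.2)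
  have hcs : ∀ s ∈ S, U.card ^ 2 ≤
      (q + 1) * ∑ v ∈ U, (U.filter fun w => slopeFrom s w = slopeFrom s v).card := by
    intro s _
    simpa [hqdef] using card_sq_le_collisions U (slopeFrom s)
  have htot : S.card * U.card ^ 2 ≤ (q + 1) *
      (∑ v ∈ U, (U.filter fun w => w ≠ v ∧ ∃ s ∈ S, crossDet s v w = 0).card
        + U.card * S.card) := by
    calc S.card * U.card ^ 2 = ∑ s ∈ S, U.card ^ 2 := by simp
      _ ≤ ∑ s ∈ S, (q + 1) * ∑ v ∈ U, (U.filter fun w => slopeFrom s w = slopeFrom s v).card :=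
        sum_le_sum hcs
      _ = (q + 1) * ∑ v ∈ U, ∑ s ∈ S, (U.filter fun w => slopeFrom s w = slopeFrom s v).card := by
        rw [← mul_sum, sum_comm]
      _ ≤ _ := by
        gcongr
        refine (sum_le_sum hdisj).trans ?_
        rw [sum_add_distrib, sum_const, smul_eq_mul]
  -- It remains to compare averages; `|U| > 4q` absorbs the diagonal collisions.
  refine exists_le_of_sum_le hUne ?_
  rw [sum_const, nsmul_eq_mul, ← Nat.cast_sum]
  set D := ∑ v ∈ U, (U.filter fun w => w ≠ v ∧ ∃ s ∈ S, crossDet s v w = 0).card with hDdef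
  clear_value D q
  have htotR : (S.card : ℝ) * (U.card : ℝ) ^ 2 ≤ (q + 1) * (D + U.card * S.card) := by
    exact_mod_cast htot
  have hqR : (1 : ℝ) ≤ q := by exact_mod_cast hq
  have hcR : 4 * (q : ℝ) ≤ U.card := by exact_mod_cast hcard.le
  rw [div_mul_eq_mul_div, mul_div_assoc', div_le_iff₀ (by linarith)]
  have hD : (0 : ℝ) ≤ D := by positivity
  have hS : (0 : ℝ) ≤ S.card := by positivity
  have e1 : ((q : ℝ) + 1) * (D + U.card * S.card) ≤ 2 * q * (D + U.card * S.card) := by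
    gcongr
    linarith
  have e2 : (4 * (q : ℝ)) * (U.card * S.card) ≤ U.card * (U.card * S.card) := by gcongr
  nlinarith

/-! ### Counting arcs and collinear sets -/

open Classical in
/-- Upper bound for the number of `k`-arcs: fix an `m`-subset `S` of the arc. The other points avoid
the secants of `S` and form an independent set of the collinearity graph of `S`, so they lie in one
of few containers of size at most `4q + t`. -/
theorem card_arcs_le {F : Type*} [Field F] [Fintype F] (m k t : ℕ) (hmk : m ≤ k)
    (hmq : m ≤ 4 * Fintype.card F)
    (ht : (Fintype.card F : ℝ) ^ 2 * (1 - (m : ℝ) / (4 * Fintype.card F)) ^ t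
      ≤ 4 * Fintype.card F) :
    (((univ : Finset (F × F)).powersetCard k).filter
      fun A : Finset (F × F) => IsArc F (A : Set (F × F))).card
      ≤ (Fintype.card F ^ 2) ^ m * (Fintype.card F ^ 2 + 1) ^ t
        * (4 * Fintype.card F + t + m) ^ k := by
  have hq : 0 < Fintype.card F := Fintype.card_pos
  set q := Fintype.card F with hqdef
  have hV : (univ : Finset (F × F)).card = q ^ 2 := by
    rw [card_univ, Fintype.card_prod, sq]
  have hβ1 : (m : ℝ) / (4 * q) ≤ 1 := by
    rw [div_le_one (by positivity)]
    exact_mod_cast hmq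
  let U : Finset (F × F) → Finset (F × F) := fun S =>
    univ.filter fun x => ∀ s ∈ S, ∀ s' ∈ S, s ≠ s' → crossDet x s s' ≠ 0
  have hUc : ∀ S, (U S).card ≤ q ^ 2 := fun S => (card_le_card (subset_univ _)).trans hV.le
  have hcont : ∀ S : Finset (F × F), ∃ 𝒞 : Finset (Finset (F × F)), S.card = m →
      𝒞.card ≤ (q ^ 2 + 1) ^ t ∧ (∀ C ∈ 𝒞, C.card ≤ 4 * q + t) ∧
        ∀ I ⊆ U S, (∀ x ∈ I, ∀ y ∈ I, x ≠ y → ¬ ∃ s ∈ S, crossDet s x y = 0) →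
          ∃ C ∈ 𝒞, I ⊆ C := by
    intro S
    by_cases hS : S.card = m
    · obtain ⟨𝒞, h𝒞⟩ := graph_containers (fun x y : F × F => ∃ s ∈ S, crossDet s x y = 0)
        ((m : ℝ) / (4 * q)) (4 * q) hβ1 (q ^ 2) (U S) (hUc S) (by
          intro W hW hWc
          obtain ⟨v, hv, h⟩ := exists_large_degree S W
            (fun x hx => (mem_filter.mp (hW hx)).2) hWc
          exact ⟨v, hv, by rw [hS] at h; convert h⟩) t (by
          refine le_trans ?_ (ht.trans (by push_cast; exact le_rfl))
          have h0 : (0 : ℝ) ≤ (1 - (m : ℝ) / (4 * q)) ^ t := pow_nonneg (by linarith) _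
          refine mul_le_mul_of_nonneg_right ?_ h0
          exact_mod_cast hUc S)
      exact ⟨𝒞, fun _ => h𝒞⟩
    · exact ⟨∅, fun h => absurd h hS⟩
  choose 𝒞 h𝒞 using hcont
  have hsub : (((univ : Finset (F × F)).powersetCard k).filter
      fun A : Finset (F × F) => IsArc F (A : Set (F × F))) ⊆
      (powersetCard m (univ : Finset (F × F))).biUnion fun S =>
        (𝒞 S).biUnion fun C => powersetCard k (C ∪ S) := by
    intro A hA
    obtain ⟨hA, harc⟩ := mem_filter.mp hA
    have hAk := (mem_powersetCard.mp hA).2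
    obtain ⟨S, hSA, hSm⟩ := exists_subset_card_eq (hmk.trans hAk.ge)
    obtain ⟨_, _, h⟩ := h𝒞 S hSm
    obtain ⟨C, hC, hAC⟩ := h (A \ S) (by
      intro x hx
      obtain ⟨hxA, hxS⟩ := mem_sdiff.mp hx
      refine mem_filter.mpr ⟨mem_univ _, fun s hs s' hs' hss' h0 => ?_⟩
      exact harc x hxA s (hSA hs) s' (hSA hs') (fun h => hxS (h ▸ hs)) (fun h => hxS (h ▸ hs'))
        hss' ((collinear_iff_crossDet _ _ _).mpr h0)) (by
      rintro x hx y hy hxy ⟨s, hs, h0⟩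
      obtain ⟨hxA, hxS⟩ := mem_sdiff.mp hx
      obtain ⟨hyA, hyS⟩ := mem_sdiff.mp hy
      exact harc s (hSA hs) x hxA y hyA (fun h => hxS (h ▸ hs)) (fun h => hyS (h ▸ hs))
        hxy ((collinear_iff_crossDet _ _ _).mpr h0))
    refine mem_biUnion.mpr ⟨S, mem_powersetCard.mpr ⟨subset_univ _, hSm⟩,
      mem_biUnion.mpr ⟨C, hC, mem_powersetCard.mpr ⟨?_, hAk⟩⟩⟩
    intro x hx
    by_cases hxS : x ∈ S
    · exact mem_union_right _ hxS
    · exact mem_union_left _ (hAC (mem_sdiff.mpr ⟨hx, hxS⟩))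
  calc _ ≤ _ := card_le_card hsub
    _ ≤ (powersetCard m (univ : Finset (F × F))).card *
        ((q ^ 2 + 1) ^ t * (4 * q + t + m) ^ k) := by
      refine card_biUnion_le_card_mul _ _ _ fun S hS => ?_
      have hSm := (mem_powersetCard.mp hS).2
      obtain ⟨h1, h2, _⟩ := h𝒞 S hSm
      refine (card_biUnion_le_card_mul _ _ ((4 * q + t + m) ^ k) fun C hC => ?_).trans
        (Nat.mul_le_mul_right _ h1)
      rw [card_powersetCard]
      refine (Nat.choose_le_pow _ _).trans (Nat.pow_le_pow_left ?_ _)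
      refine (card_union_le _ _).trans ?_
      have := h2 C hC
      omega
    _ ≤ (q ^ 2) ^ m * ((q ^ 2 + 1) ^ t * (4 * q + t + m) ^ k) := by
      gcongr
      rw [card_powersetCard, hV]
      exact Nat.choose_le_pow _ _
    _ = _ := by ring

open Classical in
/-- The plane has at most `2q²` lines, each with `q` points. -/
theorem card_collinear_sets_le {F : Type*} [Field F] [Fintype F] (j : ℕ) :
    (((univ : Finset (F × F)).powersetCard j).filter
      fun A : Finset (F × F) => Collinear F (A : Set (F × F))).card
      ≤ 2 * Fintype.card F ^ 2 * Fintype.card F ^ j := by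
  let line : Bool × F × F → Finset (F × F) := fun i =>
    if i.1 then univ.image fun x : F => (x, i.2.1 * x + i.2.2)
    else univ.image fun y : F => (i.2.1, y)
  have hline : ∀ i, (line i).card ≤ Fintype.card F := by
    intro i
    simp only [line]
    split_ifs
    · exact card_image_le
    · exact card_image_le
  have hsub : (((univ : Finset (F × F)).powersetCard j).filter
      fun A : Finset (F × F) => Collinear F (A : Set (F × F))) ⊆
      (univ : Finset (Bool × F × F)).biUnion fun i => powersetCard j (line i) := by
    intro A hA
    obtain ⟨hA, hcol⟩ := mem_filter.mp hA
    have hAj := (mem_powersetCard.mp hA).2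
    obtain ⟨p₀, v, hv⟩ := (collinear_iff_exists_forall_eq_smul_vadd _).mp hcol
    by_cases h1 : v.1 = 0
    · refine mem_biUnion.mpr ⟨(false, p₀.1, 0), mem_univ _, mem_powersetCard.mpr ⟨?_, hAj⟩⟩
      intro x hx
      obtain ⟨r, hr⟩ := hv x hx
      refine mem_image.mpr ⟨x.2, mem_univ _, Prod.ext ?_ rfl⟩
      simp [hr, h1]
    · refine mem_biUnion.mpr ⟨(true, v.2 / v.1, p₀.2 - v.2 / v.1 * p₀.1), mem_univ _,
        mem_powersetCard.mpr ⟨?_, hAj⟩⟩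
      intro x hx
      obtain ⟨r, hr⟩ := hv x hx
      refine mem_image.mpr ⟨x.1, mem_univ _, Prod.ext rfl ?_⟩
      simp [hr]
      field_simp
      ring
  refine (card_le_card hsub).trans ?_
  refine (card_biUnion_le_card_mul _ _ (Fintype.card F ^ j) fun i _ => ?_).trans ?_
  · rw [card_powersetCard]
    exact (Nat.choose_le_pow _ _).trans (Nat.pow_le_pow_left (hline i) _)
  · simp [sq]

/-! ### Random subsets and the deletion method -/

/-- A random subset `Q`, containing each point independently with probability `p`, contains the
fixed set `S` with probability `p ^ |S|`. -/
theorem sum_weight_superset {V : Type*} [Fintype V] [DecidableEq V] (p : ℝ) (S : Finset V) :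
    ∑ Q : Finset V, (p ^ Q.card * (1 - p) ^ (univ \ Q).card) * (if S ⊆ Q then 1 else 0)
      = p ^ S.card := by
  have h := prod_add (fun _ : V => p) (fun x : V => if x ∈ S then 0 else 1 - p) univ
  have hL : ∏ x : V, (p + if x ∈ S then 0 else 1 - p) = p ^ S.card := by
    rw [← prod_subset (subset_univ S)]
    · rw [← prod_const]
      exact prod_congr rfl fun x hx => by simp [hx]
    · intro x _ hx
      simp [hx]
  rw [← hL, h, powerset_univ]
  refine sum_congr rfl fun Q _ => ?_
  rw [prod_const, mul_assoc]
  congr 1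
  split_ifs with hS
  · rw [mul_one, ← prod_const]
    refine prod_congr rfl fun x hx => ?_
    have : x ∉ S := fun hxS => (mem_sdiff.mp hx).2 (hS hxS)
    simp [this]
  · obtain ⟨x, hxS, hxQ⟩ := not_subset.mp hS
    rw [mul_zero, eq_comm]
    exact prod_eq_zero (i := x) (by simp [hxQ]) (by simp [hxS])

/-- First moment method: some `Q` does at least as well as a `p`-random subset does on average for
the functional `∑ S ⊆ Q, a S`. -/
theorem exists_sum_ge_expectation {V : Type*} [Fintype V] [DecidableEq V] (p : ℝ) (hp0 : 0 ≤ p)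
    (hp1 : p ≤ 1) (a : Finset V → ℝ) :
    ∃ Q : Finset V, ∑ S : Finset V, a S * p ^ S.card
      ≤ ∑ S : Finset V, a S * (if S ⊆ Q then 1 else 0) := by
  by_contra! hcon
  set E := ∑ S : Finset V, a S * p ^ S.card with hE
  let w : Finset V → ℝ := fun Q => p ^ Q.card * (1 - p) ^ (univ \ Q).card
  have hw : ∀ Q, 0 ≤ w Q := fun Q => mul_nonneg (pow_nonneg hp0 _) (pow_nonneg (by linarith) _)
  have hw1 : ∑ Q, w Q = 1 := by simpa using sum_weight_superset (V := V) p ∅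
  have hexp : ∑ Q, w Q * ∑ S : Finset V, a S * (if S ⊆ Q then 1 else 0) = E := by
    simp_rw [mul_sum]
    rw [sum_comm, hE]
    refine sum_congr rfl fun S _ => ?_
    rw [← sum_weight_superset p S, mul_sum]
    exact sum_congr rfl fun Q _ => by simp only [w]; ring
  have hlt : ∑ Q, w Q * ∑ S : Finset V, a S * (if S ⊆ Q then 1 else 0) < ∑ Q, w Q * E := by
    refine sum_lt_sum (fun Q _ => mul_le_mul_of_nonneg_left (hcon Q).le (hw Q)) ?_
    by_contra! hall
    have hz : ∀ Q, w Q = 0 := by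
      intro Q
      have h1 := hall Q (mem_univ _)
      have h2 := hcon Q
      by_contra hne
      have hpos : 0 < w Q := lt_of_le_of_ne (hw Q) (Ne.symm hne)
      exact absurd (le_of_mul_le_mul_left h1 hpos) (not_le.mpr h2)
    simp [hz] at hw1
  rw [hexp, ← sum_mul, hw1, one_mul] at hlt
  exact lt_irrefl _ hlt

/-- The first moment method for `|Q|` minus weighted counts of the members of three uniform families
contained in `Q`. -/
theorem exists_subset_expectation {V : Type*} [Fintype V] [DecidableEq V] (p : ℝ) (hp0 : 0 ≤ p)
    (hp1 : p ≤ 1) (𝓛 𝒯 𝒜 : Finset (Finset V)) (l j k : ℕ) (h𝓛 : ∀ S ∈ 𝓛, S.card = l)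
    (h𝒯 : ∀ S ∈ 𝒯, S.card = j) (h𝒜 : ∀ S ∈ 𝒜, S.card = k) (μ B : ℝ) :
    ∃ Q : Finset V,
      Fintype.card V * p - 𝓛.card * p ^ l - μ * (𝒯.card * p ^ j) - B * (𝒜.card * p ^ k)
      ≤ (Q.card : ℝ) - (𝓛.filter (· ⊆ Q)).card - μ * (𝒯.filter (· ⊆ Q)).card
        - B * (𝒜.filter (· ⊆ Q)).card := by
  -- The size of `Q` is the number of singletons contained in it.
  let 𝒮 : Finset (Finset V) := univ.image fun x => {x}
  have hfam : ∀ (ℱ : Finset (Finset V)) (f : Finset V → ℝ),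
      ∑ S : Finset V, (if S ∈ ℱ then 1 else 0) * f S = ∑ S ∈ ℱ, f S := by
    intro ℱ f
    simp [ite_mul]
  obtain ⟨Q, hQ⟩ := exists_sum_ge_expectation p hp0 hp1 fun S : Finset V =>
    (if S ∈ 𝒮 then 1 else 0) - (if S ∈ 𝓛 then 1 else 0) - μ * (if S ∈ 𝒯 then 1 else 0)
      - B * (if S ∈ 𝒜 then 1 else 0)
  refine ⟨Q, ?_⟩
  simp only [sub_mul, sum_sub_distrib, mul_assoc, ← mul_sum, hfam] at hQ
  have hpow : ∀ (ℱ : Finset (Finset V)) (i : ℕ), (∀ S ∈ ℱ, S.card = i) →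
      ∑ S ∈ ℱ, p ^ S.card = ℱ.card * p ^ i := by
    intro ℱ i hi
    rw [sum_congr rfl fun S hS => by rw [hi S hS], sum_const, nsmul_eq_mul]
  have hcnt : ∀ ℱ : Finset (Finset V),
      ∑ S ∈ ℱ, (if S ⊆ Q then (1 : ℝ) else 0) = (ℱ.filter (· ⊆ Q)).card := by
    intro ℱ
    simp
  have hS1 : ∑ S ∈ 𝒮, p ^ S.card = Fintype.card V * p := by
    rw [sum_image (fun x _ y _ h => by simpa using h)]
    simp
  have hS2 : ∑ S ∈ 𝒮, (if S ⊆ Q then (1 : ℝ) else 0) = Q.card := by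
    rw [sum_image (fun x _ y _ h => by simpa using h)]
    simp
  rw [hS1, hS2, hpow 𝓛 l h𝓛, hpow 𝒯 j h𝒯, hpow 𝒜 k h𝒜] at hQ
  simpa only [hcnt] using hQ

/-- Deleting from `Q` one point of each member of `𝓛` inside `Q` destroys all of them. -/
theorem exists_deletion {V : Type*} [DecidableEq V] (𝓛 : Finset (Finset V))
    (hne : ∀ S ∈ 𝓛, S.Nonempty) (Q : Finset V) :
    ∃ P ⊆ Q, Q.card ≤ P.card + (𝓛.filter (· ⊆ Q)).card ∧ ∀ S ∈ 𝓛, ¬ S ⊆ P := by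
  have hex : ∀ S : {S // S ∈ 𝓛.filter (· ⊆ Q)}, ∃ y, y ∈ S.1 := fun S =>
    hne S.1 (mem_filter.mp S.2).1
  choose f hf using hex
  set D := (𝓛.filter (· ⊆ Q)).attach.image f with hD
  have hDc : D.card ≤ (𝓛.filter (· ⊆ Q)).card := card_image_le.trans (by simp)
  refine ⟨Q \ D, sdiff_subset, ?_, ?_⟩
  · have := le_card_sdiff D Q
    omega
  · intro S hS hsub
    have hSQ : S ∈ 𝓛.filter (· ⊆ Q) := mem_filter.mpr ⟨hS, hsub.trans sdiff_subset⟩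
    have h1 := hsub (hf ⟨S, hSQ⟩)
    exact (mem_sdiff.mp h1).2 (mem_image_of_mem _ (mem_attach _ _))

/-- The construction for given parameters. Some `Q` has a value of
`|Q| - #(collinear l-sets) - μ #(collinear triples) - q² #(k-arcs)` at least its mean, which is at
least half of the expected size `q² p`. As `|Q| ≤ q²`, such a `Q` contains no `k`-arc; deleting one
point from each collinear `l`-set leaves `P`. Subtracting the triples with weight `μ` bounds them by
`|P| / μ` directly, so that no concentration of `|Q|` is needed. -/
theorem exists_set_of_parameters {F : Type*} [Field F] [Fintype F] (l m k t : ℕ) (hl : 0 < l)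
    (hmk : m ≤ k) (hmq : m ≤ 4 * Fintype.card F)
    (ht : (Fintype.card F : ℝ) ^ 2 * (1 - (m : ℝ) / (4 * Fintype.card F)) ^ t
      ≤ 4 * Fintype.card F)
    (p μ : ℝ) (hp0 : 0 < p) (hp1 : p ≤ 1) (hμ : 0 ≤ μ)
    (hL : 2 * (Fintype.card F : ℝ) ^ 2 * (Fintype.card F : ℝ) ^ l * p ^ l
      ≤ (Fintype.card F : ℝ) ^ 2 * p / 8)
    (hT : μ * (2 * (Fintype.card F : ℝ) ^ 2 * (Fintype.card F : ℝ) ^ 3 * p ^ 3)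
      ≤ (Fintype.card F : ℝ) ^ 2 * p / 8)
    (hA : (Fintype.card F : ℝ) ^ 2 * ((((Fintype.card F : ℝ) ^ 2) ^ m
        * ((Fintype.card F : ℝ) ^ 2 + 1) ^ t * (4 * (Fintype.card F : ℝ) + t + m) ^ k) * p ^ k)
      ≤ (Fintype.card F : ℝ) ^ 2 * p / 8) :
    ∃ P : Finset (F × F), (Fintype.card F : ℝ) ^ 2 * p / 2 ≤ P.card ∧ NoLCollinear F l P ∧
      maxArc F P ≤ k ∧ μ * numCollinearTriples F P ≤ P.card := by
  classical
  have hq : 0 < Fintype.card F := Fintype.card_pos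
  have hcA := card_arcs_le (F := F) m k t hmk hmq ht
  have hcL := card_collinear_sets_le (F := F) l
  have hcT := card_collinear_sets_le (F := F) 3
  have hV : Fintype.card (F × F) = Fintype.card F ^ 2 := by rw [Fintype.card_prod, sq]
  set q := Fintype.card F with hqdef
  set 𝒜 := ((univ : Finset (F × F)).powersetCard k).filter
    fun A : Finset (F × F) => IsArc F (A : Set (F × F)) with h𝒜
  set 𝓛 := ((univ : Finset (F × F)).powersetCard l).filter
    fun A : Finset (F × F) => Collinear F (A : Set (F × F)) with h𝓛
  set 𝒯 := ((univ : Finset (F × F)).powersetCard 3).filter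
    fun A : Finset (F × F) => Collinear F (A : Set (F × F)) with h𝒯
  have hcard𝓛 : ∀ S ∈ 𝓛, S.card = l := fun S hS =>
    (mem_powersetCard.mp (mem_filter.mp hS).1).2
  obtain ⟨Q, hQ⟩ := exists_subset_expectation p hp0.le hp1 𝓛 𝒯 𝒜 l 3 k hcard𝓛
    (fun S hS => (mem_powersetCard.mp (mem_filter.mp hS).1).2)
    (fun S hS => (mem_powersetCard.mp (mem_filter.mp hS).1).2) μ ((q : ℝ) ^ 2)
  obtain ⟨P, hPQ, hPc, hP⟩ := exists_deletion 𝓛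
    (fun S hS => card_pos.mp (by rw [hcard𝓛 S hS]; exact hl)) Q
  have hqR : (0 : ℝ) < q := by exact_mod_cast hq
  have b1 : (𝓛.card : ℝ) * p ^ l ≤ (q : ℝ) ^ 2 * p / 8 := by
    refine le_trans ?_ hL
    gcongr
    exact_mod_cast hcL
  have b2 : μ * ((𝒯.card : ℝ) * p ^ 3) ≤ (q : ℝ) ^ 2 * p / 8 := by
    refine le_trans ?_ hT
    gcongr
    exact_mod_cast hcT
  have b3 : (q : ℝ) ^ 2 * ((𝒜.card : ℝ) * p ^ k) ≤ (q : ℝ) ^ 2 * p / 8 := by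
    refine le_trans ?_ hA
    gcongr
    exact_mod_cast hcA
  have hN : 0 < (q : ℝ) ^ 2 * p := by positivity
  have hPcR : (Q.card : ℝ) ≤ P.card + (𝓛.filter (· ⊆ Q)).card := by exact_mod_cast hPc
  have hQq : (Q.card : ℝ) ≤ (q : ℝ) ^ 2 := by
    have := card_le_univ Q
    rw [hV] at this
    exact_mod_cast this
  rw [hV] at hQ
  push_cast at hQ
  have n1 : (0 : ℝ) ≤ (𝓛.filter (· ⊆ Q)).card := by positivity
  have n2 : (0 : ℝ) ≤ μ * (𝒯.filter (· ⊆ Q)).card := by positivity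
  have n3 : (0 : ℝ) ≤ (q : ℝ) ^ 2 * (𝒜.filter (· ⊆ Q)).card := by positivity
  have hempty : 𝒜.filter (· ⊆ Q) = ∅ := by
    by_contra hne
    have h1 : (1 : ℝ) ≤ (𝒜.filter (· ⊆ Q)).card := by
      exact_mod_cast card_pos.mpr (nonempty_iff_ne_empty.mpr hne)
    have h2 : (q : ℝ) ^ 2 * 1 ≤ (q : ℝ) ^ 2 * (𝒜.filter (· ⊆ Q)).card := by gcongr
    linarith
  refine ⟨P, by linarith, ?_, ?_, ?_⟩
  · intro s hs hsl hcol
    exact hP s (mem_filter.mpr ⟨mem_powersetCard.mpr ⟨subset_univ _, hsl⟩, hcol⟩) hs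
  · refine csSup_le ⟨0, ∅, by simp, by simp, by simp [IsArc]⟩ ?_
    rintro n ⟨s, hsP, rfl, harc⟩
    by_contra! hlt
    obtain ⟨A, hAs, hAk⟩ := exists_subset_card_eq hlt.le
    have hmem : A ∈ 𝒜.filter (· ⊆ Q) := by
      refine mem_filter.mpr ⟨mem_filter.mpr
        ⟨mem_powersetCard.mpr ⟨subset_univ _, hAk⟩, ?_⟩, (hAs.trans hsP).trans hPQ⟩
      exact fun a ha b hb c hc => harc a (hAs ha) b (hAs hb) c (hAs hc)
    rw [hempty] at hmem
    simp at hmem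
  · have hT1 : numCollinearTriples F P ≤ (𝒯.filter (· ⊆ Q)).card := by
      unfold numCollinearTriples
      rw [Nat.subtype_card (univ.filter fun s : Finset (F × F) =>
        s ⊆ P ∧ s.card = 3 ∧ Collinear F (s : Set (F × F))) (by simp)]
      refine card_le_card fun s hs => ?_
      obtain ⟨_, h1, h2, h3⟩ := mem_filter.mp hs
      exact mem_filter.mpr ⟨mem_filter.mpr
        ⟨mem_powersetCard.mpr ⟨subset_univ _, h2⟩, h3⟩, h1.trans hPQ⟩
    have hT2 : μ * (numCollinearTriples F P : ℝ) ≤ μ * (𝒯.filter (· ⊆ Q)).card := by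
      gcongr
    linarith

/-! ### Choice of parameters -/

open Filter in
theorem eventually_rpow_le {a b c : ℝ} (A B : ℝ) (hab : a < b) (hb : 0 < b) (hc : 0 < c) :
    ∀ᶠ x : ℝ in atTop, A * x ^ a + B ≤ c * x ^ b := by
  have h1 : (fun x : ℝ => A * x ^ a) =o[atTop] fun x : ℝ => x ^ b := by
    refine Asymptotics.IsLittleO.const_mul_left ?_ A
    rw [Asymptotics.isLittleO_iff_tendsto' (by
      filter_upwards [eventually_gt_atTop 0] with x hx h
      exact absurd h (Real.rpow_pos_of_pos hx b).ne')]
    refine (tendsto_rpow_neg_atTop (sub_pos.mpr hab)).congr' ?_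
    filter_upwards [eventually_gt_atTop 0] with x hx
    rw [← Real.rpow_sub hx, neg_sub]
  have h2 : (fun _ : ℝ => B) =o[atTop] fun x : ℝ => x ^ b :=
    Asymptotics.isLittleO_const_left.mpr 
      (Or.inr (tendsto_norm_atTop_atTop.comp (tendsto_rpow_atTop hb)))
  filter_upwards [(h1.add h2).bound hc, eventually_gt_atTop 0] with x hx hx0
  have : 0 ≤ x ^ b := by positivity
  rw [Real.norm_eq_abs, Real.norm_eq_abs, abs_of_nonneg this] at hx
  exact (le_abs_self _).trans hx

open Filter in
/-- The parameters are `m ≈ x ^ (1/2 + α)`, `k ≈ x ^ (1/2 + 2α)` and `t ≈ 4 x log x / m`, so that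
the `t` shrinking steps bring `x²` points below `4x`, while `m` and `t` are negligible compared
with `k`. -/
theorem eventually_exists_parameters {θ α : ℝ} (hθ : 0 < θ) (hα : 0 < α) (hα1 : α ≤ 1 / 4) :
    ∀ᶠ x : ℝ in atTop, ∃ m k t : ℕ, m ≤ k ∧ (m : ℝ) ≤ x ∧ (t : ℝ) ≤ x ∧
      x ^ 2 * (1 - (m : ℝ) / (4 * x)) ^ t ≤ 4 * x ∧
      2 + 2 * (m : ℝ) + 3 * t ≤ θ * k ∧ (k : ℝ) ≤ x ^ (1 / 2 + 2 * α) + 1 := by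
  have hlog := (isLittleO_log_rpow_atTop hα).bound one_pos
  filter_upwards [hlog, eventually_ge_atTop 1,
    eventually_rpow_le (a := 1 / 2 + α) (b := 1) (c := 1) 1 1 (by linarith) one_pos one_pos,
    eventually_rpow_le (a := 1 / 2) (b := 1 / 2 + α) (c := 1) 4 1 (by linarith) (by linarith)
      one_pos,
    eventually_rpow_le (a := 1 / 2 + α) (b := 1 / 2 + 2 * α) (c := θ) 5 7 (by linarith)
      (by linarith) hθ,
    eventually_rpow_le (a := 1 / 2 + α) (b := 1 / 2 + 2 * α) (c := 1) 1 1 (by linarith)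
      (by linarith) one_pos] with x hlg hx1 e1 e2 e3 e4
  have hx0 : 0 < x := by linarith
  have hlog0 : 0 ≤ Real.log x := Real.log_nonneg hx1
  have hlg' : Real.log x ≤ x ^ α := by
    have h0 : 0 ≤ x ^ α := by positivity
    rwa [Real.norm_eq_abs, Real.norm_eq_abs, abs_of_nonneg hlog0, abs_of_nonneg h0,
      one_mul] at hlg
  rw [Real.rpow_one] at e1
  have hm1 := Nat.le_ceil (x ^ (1 / 2 + α))
  have hm2 := (Nat.ceil_lt_add_one (by positivity : 0 ≤ x ^ (1 / 2 + α))).le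
  set m := ⌈x ^ (1 / 2 + α)⌉₊
  have hk1 := Nat.le_ceil (x ^ (1 / 2 + 2 * α))
  have hk2 := (Nat.ceil_lt_add_one (by positivity : 0 ≤ x ^ (1 / 2 + 2 * α))).le
  set k := ⌈x ^ (1 / 2 + 2 * α)⌉₊
  have hmpos : (0 : ℝ) < m := lt_of_lt_of_le (by positivity) hm1
  have ht1 := Nat.le_ceil (4 * x * Real.log x / m)
  have ht2 := (Nat.ceil_lt_add_one (by positivity : 0 ≤ 4 * x * Real.log x / m)).le
  set t := ⌈4 * x * Real.log x / m⌉₊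
  clear_value m k t
  have hdiv : 4 * x * Real.log x / m ≤ 4 * x ^ (1 / 2 : ℝ) := by
    rw [div_le_iff₀ hmpos]
    calc 4 * x * Real.log x ≤ 4 * x * x ^ α := by gcongr
      _ = 4 * x ^ (1 / 2 : ℝ) * x ^ (1 / 2 + α) := by
        rw [mul_assoc, mul_assoc, ← Real.rpow_add hx0]
        nth_rewrite 1 [← Real.rpow_one x]
        rw [← Real.rpow_add hx0]
        ring_nf
      _ ≤ _ := by gcongr
  have htm : (t : ℝ) ≤ m := by linarith
  have hmx : (m : ℝ) ≤ x := by linarith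
  refine ⟨m, k, t, ?_, hmx, htm.trans hmx, ?_, ?_, hk2⟩
  · have : (m : ℝ) ≤ k := by linarith
    exact_mod_cast this
  · have hb0 : 0 ≤ 1 - (m : ℝ) / (4 * x) := by
      rw [sub_nonneg, div_le_one (by positivity)]
      linarith
    have hexp : 1 - (m : ℝ) / (4 * x) ≤ Real.exp (-((m : ℝ) / (4 * x))) := by
      have := Real.add_one_le_exp (-((m : ℝ) / (4 * x)))
      linarith
    have hmt : Real.log x ≤ (t : ℝ) * ((m : ℝ) / (4 * x)) := by
      rw [div_le_iff₀ hmpos] at ht1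
      rw [mul_div_assoc', le_div_iff₀ (by positivity)]
      linarith
    calc x ^ 2 * (1 - (m : ℝ) / (4 * x)) ^ t
        ≤ x ^ 2 * Real.exp (-((m : ℝ) / (4 * x))) ^ t := by gcongr
      _ = x ^ 2 * Real.exp (-((t : ℝ) * ((m : ℝ) / (4 * x)))) := by
        rw [← Real.exp_nat_mul]; ring_nf
      _ ≤ x ^ 2 * Real.exp (-Real.log x) := by gcongr
      _ = x := by
        rw [Real.exp_neg, Real.exp_log hx0]
        field_simp
      _ ≤ 4 * x := by linarith
  · have : θ * x ^ (1 / 2 + 2 * α) ≤ θ * k := by gcongr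
    linarith

/-- Here `y` plays the role of `q ^ ((l - 2) / (l - 1))`, which is at most `8 |P|`. -/
theorem triple_bound_of_card_bound {L T N y : ℝ} (hL : 4 ≤ L) (hN : 0 < N) (hy : 0 ≤ y)
    (hyN : y ≤ 8 * N) (hT : T ≤ N * y ^ ((L - 3) / (L - 2))) :
    T ≤ 8 * N ^ ((2 * L - 5) / (L - 2)) := by
  have hL2 : 0 < L - 2 := by linarith
  have hr0 : 0 ≤ (L - 3) / (L - 2) := div_nonneg (by linarith) hL2.le
  have hr1 : (L - 3) / (L - 2) ≤ 1 := by rw [div_le_one hL2]; linarith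
  have hexp : (2 * L - 5) / (L - 2) = 1 + (L - 3) / (L - 2) := by field_simp; ring
  calc T ≤ N * y ^ ((L - 3) / (L - 2)) := hT
    _ ≤ N * (8 * N) ^ ((L - 3) / (L - 2)) := by gcongr
    _ = N * (8 ^ ((L - 3) / (L - 2)) * N ^ ((L - 3) / (L - 2))) := by
      rw [Real.mul_rpow (by norm_num) hN.le]
    _ ≤ N * (8 ^ (1 : ℝ) * N ^ ((L - 3) / (L - 2))) := by
      gcongr
      norm_num
    _ = 8 * N ^ ((2 * L - 5) / (L - 2)) := by
      rw [hexp, Real.rpow_add hN, Real.rpow_one, Real.rpow_one]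
      ring

/-! ### The construction -/

theorem no_l_collinear_construction :
    ∀ l : ℕ, 4 ≤ l → ∀ δ : ℝ, 0 < δ → ∃ c C : ℝ, 0 < c ∧ 0 < C ∧ ∃ q₀ : ℕ,
      ∀ (F : Type) [Field F] [Fintype F], q₀ ≤ Fintype.card F →
      ∃ P : Finset (F × F),
        c * (Fintype.card F : ℝ) ^ ((2 : ℝ) - (l : ℝ) / ((l : ℝ) - 1)) ≤ (P.card : ℝ) ∧
        NoLCollinear F l P ∧
        (maxArc F P : ℝ) ≤
          (P.card : ℝ) ^ ((((l : ℝ) - 1) / ((l : ℝ) - 2)) * ((1 : ℝ) / 2 + δ)) ∧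
        (numCollinearTriples F P : ℝ) ≤
          C * (P.card : ℝ) ^ ((2 * (l : ℝ) - 5) / ((l : ℝ) - 2)) := by
  intro l hl δ hδ
  have hl4 : (4 : ℝ) ≤ l := by exact_mod_cast hl
  set L : ℝ := (l : ℝ) with hLdef
  have hL1 : 0 < L - 1 := by linarith
  have hL2 : 0 < L - 2 := by linarith
  have hL1' : L - 1 ≠ 0 := hL1.ne'
  have hL2' : L - 2 ≠ 0 := hL2.ne'
  set e : ℝ := 2 - L / (L - 1) with he
  have he' : e = (L - 2) / (L - 1) := by rw [he]; field_simp; ring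
  have he0 : 0 < e := by rw [he']; positivity
  set θ : ℝ := 1 / (2 * (L - 1)) with hθ
  have hθ0 : 0 < θ := by positivity
  set α : ℝ := min (δ / 4) (1 / 4) with hα
  have hα0 : 0 < α := by rw [hα]; exact lt_min (by linarith) (by norm_num)
  have hαδ : α ≤ δ / 4 := min_le_left _ _
  set s : ℝ := (L - 1) / (L - 2) * (1 / 2 + δ) with hs
  have hs0 : 0 < s := by positivity
  have hes : e * s = 1 / 2 + δ := by rw [he', hs]; field_simp
  -- The factor `(1 / 8) ^ s` accounts for `|P|` being only at least `q ^ e / 8`.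
  have hev := (eventually_exists_parameters hθ0 hα0 (min_le_right _ _)).and
    ((eventually_rpow_le (a := 1 / 2 + 2 * α) (b := 1 / 2 + δ) (c := (1 / 8 : ℝ) ^ s) 1 1
      (by linarith) (by linarith) (by positivity)).and
    ((eventually_rpow_le (a := 0) (b := θ) (c := 1) 0 6 hθ0 hθ0 one_pos).and
    ((eventually_rpow_le (a := 0) (b := e) (c := 1) 0 32 he0 he0 one_pos).and
    (Filter.eventually_ge_atTop (2 : ℝ)))))
  obtain ⟨X, hX⟩ := Filter.eventually_atTop.mp hev
  refine ⟨1 / 8, 8, by norm_num, by norm_num, ⌈X⌉₊, ?_⟩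
  intro F _ _ hqF
  obtain ⟨⟨m, k, t, hmk, hmq, htq, hcont, hmt, hk⟩, h1, h2, h3, hq2⟩ :=
    hX (Fintype.card F : ℝ) ((Nat.le_ceil X).trans (by exact_mod_cast hqF))
  set x : ℝ := (Fintype.card F : ℝ) with hx
  have hx0 : 0 < x := by linarith
  rw [zero_mul, zero_add, one_mul] at h2 h3
  rw [one_mul] at h1
  -- With `p = q ^ (-l/(l-1)) / 4` the expected number of collinear `l`-sets is at most a small
  -- multiple of the expected number `q² p` of points.
  set p : ℝ := 1 / 4 * x ^ (-(L / (L - 1))) with hp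
  have hp0 : 0 < p := by positivity
  have hp1 : p ≤ 1 := by
    have : x ^ (-(L / (L - 1))) ≤ 1 :=
      Real.rpow_le_one_of_one_le_of_nonpos (by linarith) (by
        rw [neg_nonpos]; exact div_nonneg (by linarith) hL1.le)
    linarith
  have hN : x ^ 2 * p = 1 / 4 * x ^ e := by
    rw [hp, he, Real.rpow_sub hx0, Real.rpow_two, Real.rpow_neg hx0.le]
    ring
  obtain ⟨n, rfl⟩ : ∃ n, l = n + 1 := ⟨l - 1, by omega⟩
  have hLn : L - 1 = n := by rw [hLdef]; push_cast; ring
  have hpn : x ^ (n + 1) * p ^ n = (1 / 4 : ℝ) ^ n := by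
    rw [hp, mul_pow, ← Real.rpow_natCast (x ^ (-(L / (L - 1)))), ← Real.rpow_mul hx0.le, ← hLn,
      neg_mul, div_mul_cancel₀ _ hL1', Real.rpow_neg hx0.le, hLdef, Real.rpow_natCast]
    field_simp
  have hμ : 16 * x ^ 3 * p ^ 2 = (x ^ e) ^ ((L - 3) / (L - 2)) := by
    rw [← Real.rpow_mul hx0.le, hp, mul_pow, ← Real.rpow_natCast (x ^ (-(L / (L - 1)))),
      ← Real.rpow_mul hx0.le]
    have : e * ((L - 3) / (L - 2)) = 3 + -(L / (L - 1)) * (2 : ℕ) := by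
      rw [he']; push_cast; field_simp; ring
    rw [this, Real.rpow_add hx0]
    norm_cast
    ring
  obtain ⟨P, hPc, hPl, hPa, hPt⟩ := exists_set_of_parameters (F := F) (n + 1) m k t (by omega) hmk
    (by
      have : (m : ℝ) ≤ 4 * x := by linarith
      rw [hx] at this
      exact_mod_cast this) hcont p (1 / (16 * x ^ 3 * p ^ 2)) hp0 hp1 (by positivity)
    (by
      calc 2 * x ^ 2 * x ^ (n + 1) * p ^ (n + 1) = 2 * (x ^ 2 * p) * (x ^ (n + 1) * p ^ n) := by
            ring
        _ ≤ 2 * (x ^ 2 * p) * (1 / 4) ^ 3 := by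
            rw [hpn]
            refine mul_le_mul_of_nonneg_left ?_ (by positivity)
            exact pow_le_pow_of_le_one (by norm_num) (by norm_num) (by omega)
        _ ≤ x ^ 2 * p / 8 := by
            have : 0 < x ^ 2 * p := by positivity
            linarith)
    (by
      apply le_of_eq
      change 1 / (16 * x ^ 3 * p ^ 2) * (2 * x ^ 2 * x ^ 3 * p ^ 3) = x ^ 2 * p / 8
      field_simp
      norm_num)
    (by
      change x ^ 2 * (((x ^ 2) ^ m * (x ^ 2 + 1) ^ t * (4 * x + t + m) ^ k) * p ^ k)
        ≤ x ^ 2 * p / 8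
      -- Containers have at most `6q` points, of which a random set contains fewer than one on
      -- average, whence the gain of `q ^ (-θ k)` over the number of containers.
      have hxp : (4 * x + t + m) * p ≤ x ^ (-θ) := by
        calc (4 * x + t + m) * p ≤ (6 * x) * p := by gcongr; linarith
          _ = 6 / 4 * x ^ (-θ + -θ) := by
            have : -θ + -θ = 1 + -(L / (L - 1)) := by rw [hθ]; field_simp; ring
            rw [this, Real.rpow_add hx0, Real.rpow_one, hp]
            ring
          _ ≤ x ^ θ * x ^ (-θ + -θ) := by gcongr; linarith
          _ = x ^ (-θ) := by rw [← Real.rpow_add hx0]; ring_nf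
      have hx3 : x ^ 2 + 1 ≤ x ^ 3 := by nlinarith
      calc x ^ 2 * (((x ^ 2) ^ m * (x ^ 2 + 1) ^ t * (4 * x + t + m) ^ k) * p ^ k)
          = x ^ 2 * ((x ^ 2) ^ m * (x ^ 2 + 1) ^ t) * ((4 * x + t + m) * p) ^ k := by
            rw [mul_pow (4 * x + t + m) p]; ring
        _ ≤ x ^ 2 * ((x ^ 2) ^ m * (x ^ 3) ^ t) * (x ^ (-θ)) ^ k := by gcongr
        _ = x ^ (2 + 2 * (m : ℝ) + 3 * t + -θ * k) := by
            rw [Real.rpow_add hx0, Real.rpow_add hx0, Real.rpow_add hx0, Real.rpow_mul hx0.le,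
              Real.rpow_mul hx0.le, Real.rpow_mul hx0.le]
            norm_cast
            ring
        _ ≤ 1 := Real.rpow_le_one_of_one_le_of_nonpos (by linarith) (by linarith)
        _ ≤ x ^ 2 * p / 8 := by rw [hN]; linarith)
  change x ^ 2 * p / 2 ≤ (P.card : ℝ) at hPc
  have hP8 : 1 / 8 * x ^ e ≤ (P.card : ℝ) := by rw [hN] at hPc; linarith
  have hP0 : (0 : ℝ) < P.card := lt_of_lt_of_le (by positivity) hP8
  refine ⟨P, hP8, hPl, ?_, ?_⟩
  · calc (maxArc F P : ℝ) ≤ k := by exact_mod_cast hPa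
      _ ≤ (1 / 8) ^ s * x ^ (1 / 2 + δ) := hk.trans h1
      _ = (1 / 8 * x ^ e) ^ s := by
        rw [Real.mul_rpow (by norm_num) (by positivity), ← Real.rpow_mul hx0.le, hes]
      _ ≤ (P.card : ℝ) ^ s := by gcongr
  · rw [one_div_mul_eq_div, div_le_iff₀ (by positivity), hμ] at hPt
    exact triple_bound_of_card_bound (by linarith) hP0 (by positivity) (by linarith) hPt
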